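/- Let γ ∈ R^+ \ Δ satisfy ℓ(s_γ) = ⟨2ρ, γ^∨⟩ − 1. Then for every 1 ≤ j ≤ n with ⟨α_j, γ^∨⟩ > 0 one has ⟨α_j, γ^∨⟩ = 1; moreover, setting β := s_j(γ), one has β^∨ = γ^∨ − α_j^∨ and ℓ(s_β) = ℓ(s_γ) − 2 = ⟨2ρ, β^∨⟩ − 1. -/

import Mathlib

/-!
Put `k = ⟨α_j, γ^∨⟩ > 0` and `β = s_j(γ)`.  Then `β^∨ = γ^∨ - k α_j^∨`, and `⟨2ρ, α_j^∨⟩ = 2`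
because `s_j` permutes the positive roots other than `α_j` (`pairTwoRho_single`); hence
`⟨2ρ, β^∨⟩ = ⟨2ρ, γ^∨⟩ - 2k`.  Since `s_γ = s_j s_β s_j`, also `ℓ(s_γ) ≤ ℓ(s_β) + 2`.

The general bound `ℓ(s_β) ≤ ⟨2ρ, β^∨⟩ - 1` for positive roots `β` (`len_refl_le`) follows by
induction on the height of `β^∨`: a non-simple positive `β` has a simple root `α_i` with
`⟨α_i, β^∨⟩ > 0`, and passing to `s_i(β)` lowers the right side by at least `2` and the left side
by at most `2`.  Under the hypothesis `ℓ(s_γ) = ⟨2ρ, γ^∨⟩ - 1`, the chain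
`ℓ(s_γ) ≤ ℓ(s_β) + 2 ≤ ⟨2ρ, γ^∨⟩ - 2k + 1` forces `k ≤ 1`, so `k = 1` and both inequalities are
equalities.
-/

open scoped BigOperators

/-- A reduced crystallographic root system with a fixed base `α_1, …, α_n` of simple
roots, bundled with its Weyl group `W`.  A root `γ` is recorded by its integer
coordinate vector in the basis of simple roots (so the `i`-th simple root is
`Pi.single i 1`), and `cor γ` is the coordinate vector of the coroot `γ^∨` in the
basis of simple coroots (hence `cor γ i = ⟨χ_i, γ^∨⟩` for the fundamental weights
`χ_i`).  `A i j = ⟨α_i, α_j^∨⟩` is the Cartan matrix, `σ γ` is the reflection `s_γ`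
and `act` is the action of the Weyl group on the root lattice. -/
structure RootSystemData (n : ℕ) where
  A : Fin n → Fin n → ℤ
  R : Finset (Fin n → ℤ)
  cor : (Fin n → ℤ) → (Fin n → ℤ)
  W : Type
  [grp : Group W]
  σ : (Fin n → ℤ) → W
  act : W → (Fin n → ℤ) → (Fin n → ℤ)
  simple_mem : ∀ i : Fin n, (Pi.single i 1 : Fin n → ℤ) ∈ R
  root_ne_zero : ∀ γ ∈ R, γ ≠ 0
  neg_mem : ∀ γ ∈ R, -γ ∈ R
  pos_or_neg : ∀ γ ∈ R, (∀ i, 0 ≤ γ i) ∨ (∀ i, γ i ≤ 0)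
  reduced : ∀ γ ∈ R, ∀ k : ℤ, k • γ ∈ R → k = 1 ∨ k = -1
  cor_simple : ∀ i : Fin n, cor (Pi.single i 1) = Pi.single i 1
  cor_neg : ∀ γ ∈ R, cor (-γ) = -(cor γ)
  pair_self : ∀ γ ∈ R, (∑ i, ∑ j, γ i * A i j * cor γ j) = 2
  act_one : ∀ x, act 1 x = x
  act_mul : ∀ w w' x, act (w * w') x = act w (act w' x)
  act_refl : ∀ γ ∈ R, ∀ x, act (σ γ) x = x - (∑ i, ∑ j, x i * A i j * cor γ j) • γ
  act_mem : ∀ (w : W), ∀ γ ∈ R, act w γ ∈ R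
  cor_refl : ∀ γ ∈ R, ∀ β ∈ R,
    cor (act (σ γ) β) = cor β - (∑ i, ∑ j, γ i * A i j * cor β j) • cor γ
  refl_sq : ∀ γ ∈ R, σ γ * σ γ = 1
  refl_act : ∀ (w : W), ∀ γ ∈ R, σ (act w γ) = w * σ γ * w⁻¹
  act_faithful : ∀ w w' : W, (∀ γ ∈ R, act w γ = act w' γ) → w = w'
  generated : ∀ w : W, ∃ l : List (Fin n), w = (l.map fun i => σ (Pi.single i 1)).prod

namespace RootSystemData

instance {n : ℕ} (c : RootSystemData n) : Group c.W := c.grp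

/-- the pairing `⟨x, λ⟩` between an element `x` of the root lattice (coordinates in
the basis of simple roots) and an element `λ` of the coroot lattice (coordinates in
the basis of simple coroots) -/
def pair {n : ℕ} (c : RootSystemData n) (x lam : Fin n → ℤ) : ℤ :=
  ∑ i, ∑ j, x i * c.A i j * lam j

/-- the `i`-th simple root -/
def sroot {n : ℕ} (_c : RootSystemData n) (i : Fin n) : Fin n → ℤ := Pi.single i 1

/-- the simple reflection `s_i` -/
def s {n : ℕ} (c : RootSystemData n) (i : Fin n) : c.W := c.σ (c.sroot i)

/-- `s_{α_{t+1}}` for a `0`-based natural number index `t` (`= 1` when out of range) -/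
def sN {n : ℕ} (c : RootSystemData n) (t : ℕ) : c.W := if h : t < n then c.s ⟨t, h⟩ else 1

/-- `⟨2ρ, λ⟩ = Σ_{β ∈ R^+} ⟨β, λ⟩`, where `ρ` is the half-sum of the positive roots -/
def pairTwoRho {n : ℕ} (c : RootSystemData n) (lam : Fin n → ℤ) : ℤ :=
  ∑ β ∈ c.R, if ∀ i, 0 ≤ β i then c.pair β lam else 0

/-- the length of `w ∈ W` with respect to the simple reflections -/
noncomputable def len {n : ℕ} (c : RootSystemData n) (w : c.W) : ℕ :=
  sInf {k | ∃ l : List (Fin n), l.length = k ∧ (l.map c.s).prod = w}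

/-- the parabolic subgroup `W_S` generated by the simple reflections indexed by `S` -/
def Wsub {n : ℕ} (c : RootSystemData n) (S : Finset (Fin n)) : Subgroup c.W :=
  Subgroup.closure (c.s '' ↑S)

/-- `w ∈ W_T^S`: `w ∈ W_T` and `w` has minimal length in the coset `w W_S` -/
def MinRep {n : ℕ} (c : RootSystemData n) (T S : Finset (Fin n)) (w : c.W) : Prop :=
  w ∈ c.Wsub T ∧ ∀ u ∈ c.Wsub S, c.len w ≤ c.len (w * u)

/-- `w` is the longest element of `W_S` -/
def IsLongest {n : ℕ} (c : RootSystemData n) (S : Finset (Fin n)) (w : c.W) : Prop :=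
  w ∈ c.Wsub S ∧ ∀ v ∈ c.Wsub S, c.len v ≤ c.len w

end RootSystemData

/-- the support of `γ` is contained in `S`, i.e. `γ` lies in the span of
`{α_i : i ∈ S}` (for a root `γ`, membership in `R_S`) -/
def suppIn {n : ℕ} (S : Finset (Fin n)) (γ : Fin n → ℤ) : Prop :=
  ∀ i, i ∉ S → γ i = 0

/-- `Δ_j` for `0 ≤ j ≤ r+1`: the index set of the first `j` simple roots for `j ≤ r`,
and all of `Δ` for `j = r+1`.  (Indices of simple roots are `0`-based, so
`α_1, …, α_j` correspond to the indices `0, …, j-1`.) -/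
def deltaSet (n r j : ℕ) : Finset (Fin n) :=
  if j = r + 1 then Finset.univ else Finset.univ.filter fun i => (i : ℕ) < j

namespace RootSystemData

/-- `v 0, …, v r` (standing for `v_1, …, v_{r+1}`) is the decomposition of `w`
associated to `(Δ_P, Υ)`:  each `v_i ∈ W_{Δ_i}^{Δ_{i-1}}` and `w = v_{r+1} v_r ⋯ v_1`. -/
def IsDecomp {n : ℕ} (c : RootSystemData n) (r : ℕ) (w : c.W)
    (v : Fin (r + 1) → c.W) : Prop :=
  (∀ k : Fin (r + 1), c.MinRep (deltaSet n r ((k : ℕ) + 1)) (deltaSet n r (k : ℕ)) (v k)) ∧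
    w = (List.ofFn v).reverse.prod

/-- the first `m` simple roots `α_1, …, α_m` form a path of type `A_m`:
`⟨α_i, α_j^∨⟩ = -1` if `|i-j| = 1` and `⟨α_i, α_j^∨⟩ = 0` if `|i-j| ≥ 2`. -/
def PathA {n : ℕ} (c : RootSystemData n) (m : ℕ) : Prop :=
  ∀ i j : Fin n, (i : ℕ) < m → (j : ℕ) < m →
    (((i : ℕ) + 1 = (j : ℕ) ∨ (j : ℕ) + 1 = (i : ℕ)) → c.A i j = -1) ∧
    ((i : ℕ) + 2 ≤ (j : ℕ) ∨ (j : ℕ) + 2 ≤ (i : ℕ) → c.A i j = 0)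

/-- `u_{[k,m]} = s_k s_{k+1} ⋯ s_m` (`1`-based indices; `u_{[k,m]} = 1` for `k > m`) -/
def uu {n : ℕ} (c : RootSystemData n) (k m : ℕ) : c.W :=
  ((List.range' k (m + 1 - k)).map fun t => c.sN (t - 1)).prod

/-- `u_i^{(m)} = s_{m-i+1} s_{m-i+2} ⋯ s_m` -/
def uElt {n : ℕ} (c : RootSystemData n) (i m : ℕ) : c.W := c.uu (m - i + 1) m

end RootSystemData

/-- strict lexicographic order on `Fin m → ℤ` -/
def lexLT {m : ℕ} (x y : Fin m → ℤ) : Prop :=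
  ∃ j, x j < y j ∧ ∀ k, k < j → x k = y k

/-- lexicographic order on `Fin m → ℤ` -/
def lexLE {m : ℕ} (x y : Fin m → ℤ) : Prop := x = y ∨ lexLT x y

/-- the grading `gr(q_{α_{j+1}^∨}) ∈ ℤ^{r+1}` (for the `0`-based index `j < r`), when
`Δ_P` is of type `A_r`: in `1`-based terms, `gr(q_{α_1^∨}) = 2·e_1` and
`gr(q_{α_j^∨}) = (1-j)·e_{j-1} + (1+j)·e_j` for `2 ≤ j ≤ r`. -/
def grQ (r j : ℕ) : Fin (r + 1) → ℤ := fun k =>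
  (if (k : ℕ) = j then (j : ℤ) + 2 else 0) + (if (k : ℕ) + 1 = j then -(j : ℤ) else 0)

/-- the grading `gr(q_λ)` for `λ ∈ Q_P^∨` (coordinates in simple coroots), extended
additively from the `gr(q_{α_j^∨})`, when `Δ_P` is of type `A_r` -/
def grQlam (n r : ℕ) (lam : Fin n → ℤ) : Fin (r + 1) → ℤ :=
  fun k => ∑ j, lam j * grQ r (j : ℕ) k

namespace RootSystemData

variable {n : ℕ} (c : RootSystemData n)

lemma pair_sub_smul_left (x y lam : Fin n → ℤ) (k : ℤ) :
    c.pair (x - k • y) lam = c.pair x lam - k * c.pair y lam := by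
  simp only [pair, Finset.mul_sum, ← Finset.sum_sub_distrib, Pi.sub_apply, Pi.smul_apply,
    smul_eq_mul]
  refine Finset.sum_congr rfl fun i _ => Finset.sum_congr rfl fun j _ => by ring

lemma pair_sub_smul_right (x lam mu : Fin n → ℤ) (k : ℤ) :
    c.pair x (lam - k • mu) = c.pair x lam - k * c.pair x mu := by
  simp only [pair, Finset.mul_sum, ← Finset.sum_sub_distrib, Pi.sub_apply, Pi.smul_apply,
    smul_eq_mul]
  refine Finset.sum_congr rfl fun i _ => Finset.sum_congr rfl fun j _ => by ring

lemma pair_eq_sum_sroot (x lam : Fin n → ℤ) :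
    c.pair x lam = ∑ i, x i * c.pair (c.sroot i) lam := by
  simp only [pair, sroot]
  refine Finset.sum_congr rfl fun i _ => ?_
  rw [Finset.sum_eq_single (M := ℤ) (s := Finset.univ) i
    (f := fun k => ∑ j, (Pi.single i 1 : Fin n → ℤ) k * c.A k j * lam j)]
  · simp [Finset.mul_sum, mul_assoc]
  · intro b _ hb
    simp [hb]
  · simp

lemma pair_sroot_self (j : Fin n) : c.pair (c.sroot j) (Pi.single j 1) = 2 := by
  have h := c.pair_self _ (c.simple_mem j)
  rwa [c.cor_simple] at h

lemma act_s (j : Fin n) (x : Fin n → ℤ) :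
    c.act (c.s j) x = x - c.pair x (Pi.single j 1) • c.sroot j := by
  have h := c.act_refl _ (c.simple_mem j) x
  rw [c.cor_simple] at h
  exact h

lemma cor_act_s (j : Fin n) {β : Fin n → ℤ} (hβ : β ∈ c.R) :
    c.cor (c.act (c.s j) β) =
      c.cor β - c.pair (c.sroot j) (c.cor β) • (Pi.single j 1 : Fin n → ℤ) := by
  have h := c.cor_refl _ (c.simple_mem j) β hβ
  rw [c.cor_simple] at h
  exact h

lemma s_mul_s (j : Fin n) : c.s j * c.s j = 1 := c.refl_sq _ (c.simple_mem j)

lemma act_s_act_s (j : Fin n) (x : Fin n → ℤ) : c.act (c.s j) (c.act (c.s j) x) = x := by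
  rw [← c.act_mul, s_mul_s, c.act_one]

/-- `s_j` preserves positivity of every positive root other than `α_j`: such a root has a positive
coordinate outside `j`, which `s_j` does not change. -/
lemma act_s_pos (j : Fin n) {β : Fin n → ℤ} (hβ : β ∈ c.R) (hpos : ∀ i, 0 ≤ β i)
    (hne : β ≠ c.sroot j) : ∀ i, 0 ≤ c.act (c.s j) β i := by
  obtain ⟨i, hij, hi⟩ : ∃ i, i ≠ j ∧ 0 < β i := by
    by_contra! h
    have hβ' : β = β j • (Pi.single j 1 : Fin n → ℤ) := by
      funext i
      by_cases hij : i = j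
      · subst hij; simp
      · simp [hij, le_antisymm (h i hij) (hpos i)]
    rcases c.reduced _ (c.simple_mem j) (β j) (hβ' ▸ hβ) with h1 | h1
    · rw [h1, one_smul] at hβ'
      exact hne hβ'
    · have := hpos j
      omega
  rcases c.pos_or_neg _ (c.act_mem (c.s j) β hβ) with h | h
  · exact h
  · have := h i
    rw [act_s] at this
    simp [sroot, hij] at this
    omega

lemma act_s_ne_sroot (j : Fin n) {β : Fin n → ℤ} (hpos : ∀ i, 0 ≤ β i) :
    c.act (c.s j) β ≠ c.sroot j := by
  intro h
  have h2 : β = c.act (c.s j) (c.sroot j) := by rw [← h, act_s_act_s]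
  rw [act_s, pair_sroot_self] at h2
  have := hpos j
  rw [h2] at this
  simp [sroot] at this

lemma pairTwoRho_eq_filter (lam : Fin n → ℤ) :
    c.pairTwoRho lam = ∑ β ∈ c.R with ∀ i, 0 ≤ β i, c.pair β lam := by
  rw [pairTwoRho, Finset.sum_filter]

/-- `⟨2ρ, α_j^∨⟩ = 2`: the involution `s_j` on the positive roots other than `α_j` negates the
pairing with `α_j^∨`, so only `β = α_j` contributes. -/
lemma pairTwoRho_single (j : Fin n) : c.pairTwoRho (Pi.single j 1) = 2 := by
  classical
  rw [pairTwoRho_eq_filter]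
  have hmem : c.sroot j ∈ c.R.filter fun β => ∀ i, 0 ≤ β i := by
    refine Finset.mem_filter.2 ⟨c.simple_mem j, fun i => ?_⟩
    by_cases h : i = j
    · subst h; simp [sroot]
    · simp [sroot, h]
  rw [← Finset.add_sum_erase _ _ hmem, pair_sroot_self]
  have hmaps : ∀ β ∈ (c.R.filter fun β => ∀ i, 0 ≤ β i).erase (c.sroot j),
      c.act (c.s j) β ∈ (c.R.filter fun β => ∀ i, 0 ≤ β i).erase (c.sroot j) := by
    intro β hβ
    simp only [Finset.mem_erase, Finset.mem_filter] at hβ ⊢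
    exact ⟨c.act_s_ne_sroot j hβ.2.2, c.act_mem _ _ hβ.2.1, c.act_s_pos j hβ.2.1 hβ.2.2 hβ.1⟩
  have hsum : ∑ β ∈ (c.R.filter fun β => ∀ i, 0 ≤ β i).erase (c.sroot j),
      c.pair β (Pi.single j 1) =
      ∑ β ∈ (c.R.filter fun β => ∀ i, 0 ≤ β i).erase (c.sroot j),
        -c.pair β (Pi.single j 1) := by
    refine Finset.sum_nbij' (c.act (c.s j)) (c.act (c.s j)) hmaps hmaps
      (fun β _ => c.act_s_act_s j β) (fun β _ => c.act_s_act_s j β) fun β _ => ?_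
    rw [act_s, pair_sub_smul_left, pair_sroot_self]
    ring
  rw [Finset.sum_neg_distrib] at hsum
  omega

lemma pairTwoRho_cor_act_s (j : Fin n) {β : Fin n → ℤ} (hβ : β ∈ c.R) :
    c.pairTwoRho (c.cor (c.act (c.s j) β)) =
      c.pairTwoRho (c.cor β) - 2 * c.pair (c.sroot j) (c.cor β) := by
  have h2 := c.pairTwoRho_single j
  rw [pairTwoRho_eq_filter] at h2
  rw [cor_act_s c j hβ, pairTwoRho_eq_filter, pairTwoRho_eq_filter]
  simp only [pair_sub_smul_right, Finset.sum_sub_distrib, ← Finset.mul_sum, h2]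
  ring

lemma len_prod_le (l : List (Fin n)) : c.len (l.map c.s).prod ≤ l.length :=
  Nat.sInf_le ⟨l, rfl, rfl⟩

lemma exists_reduced_word (w : c.W) : ∃ l : List (Fin n), l.length = c.len w ∧
    (l.map c.s).prod = w := by
  obtain ⟨l, hl⟩ := c.generated w
  exact Nat.sInf_mem (s := {k | ∃ l : List (Fin n), l.length = k ∧ (l.map c.s).prod = w})
    ⟨l.length, l, rfl, hl.symm⟩

lemma len_conj_le (j : Fin n) (w : c.W) : c.len (c.s j * w * c.s j) ≤ c.len w + 2 := by
  obtain ⟨l, hl, rfl⟩ := c.exists_reduced_word w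
  have h := c.len_prod_le (j :: (l ++ [j]))
  simp only [List.map_cons, List.map_append, List.map_nil, List.prod_cons, List.prod_append,
    List.prod_nil, mul_one, List.length_cons, List.length_append, List.length_nil] at h
  rw [mul_assoc]
  omega

lemma len_refl_le_act_s (j : Fin n) {β : Fin n → ℤ} (hβ : β ∈ c.R) :
    c.len (c.σ β) ≤ c.len (c.σ (c.act (c.s j) β)) + 2 := by
  have hinv : (c.s j)⁻¹ = c.s j := inv_eq_of_mul_eq_one_left (c.s_mul_s j)
  have h : c.σ (c.act (c.s j) (c.act (c.s j) β)) =
      c.s j * c.σ (c.act (c.s j) β) * (c.s j)⁻¹ :=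
    c.refl_act (c.s j) _ (c.act_mem (c.s j) β hβ)
  rw [act_s_act_s, hinv] at h
  rw [h]
  exact c.len_conj_le j _

/-- `ℓ(s_β) ≤ ⟨2ρ, β^∨⟩ - 1` for every positive root `β`. -/
lemma len_refl_le {β : Fin n → ℤ} (hβ : β ∈ c.R) (hpos : ∀ i, 0 ≤ β i) :
    (c.len (c.σ β) : ℤ) ≤ c.pairTwoRho (c.cor β) - 1 := by
  classical
  by_contra hcon
  -- a counterexample whose coroot has minimal height
  obtain ⟨δ, hδ, hmin⟩ := Finset.exists_min_image
    (c.R.filter fun δ => (∀ i, 0 ≤ δ i) ∧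
      ¬ (c.len (c.σ δ) : ℤ) ≤ c.pairTwoRho (c.cor δ) - 1)
    (fun δ => ∑ i, c.cor δ i) ⟨β, Finset.mem_filter.2 ⟨hβ, hpos, hcon⟩⟩
  obtain ⟨hδR, hδpos, hδlen⟩ := Finset.mem_filter.1 hδ
  obtain ⟨j, hj⟩ : ∃ j, 0 < c.pair (c.sroot j) (c.cor δ) := by
    by_contra! h
    have h2 : c.pair δ (c.cor δ) = 2 := c.pair_self δ hδR
    rw [pair_eq_sum_sroot] at h2
    have := Finset.sum_nonpos fun i (_ : i ∈ Finset.univ) =>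
      mul_nonpos_of_nonneg_of_nonpos (hδpos i) (h i)
    omega
  by_cases hs : δ = c.sroot j
  · have h1 : c.len (c.σ δ) ≤ 1 := by
      have := c.len_prod_le [j]
      rw [hs]
      simpa [s] using! this
    have h2 : c.pairTwoRho (c.cor δ) = 2 := by
      rw [hs, sroot, c.cor_simple, pairTwoRho_single]
    omega
  · have hheight : ∑ i, c.cor (c.act (c.s j) δ) i < ∑ i, c.cor δ i := by
      rw [cor_act_s c j hδR]
      simp only [Pi.sub_apply, Pi.smul_apply, smul_eq_mul, Finset.sum_sub_distrib,
        ← Finset.mul_sum, Finset.sum_pi_single', Finset.mem_univ, if_true]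
      omega
    have hgood : (c.len (c.σ (c.act (c.s j) δ)) : ℤ) ≤
        c.pairTwoRho (c.cor (c.act (c.s j) δ)) - 1 := by
      by_contra hbad
      have := hmin _ (Finset.mem_filter.2
        ⟨c.act_mem (c.s j) δ hδR, c.act_s_pos j hδR hδpos hs, hbad⟩)
      omega
    have hle := c.len_refl_le_act_s j hδR
    rw [pairTwoRho_cor_act_s c j hδR] at hgood
    omega

end RootSystemData

/-- Let `γ ∈ R^+ \ Δ` satisfy `ℓ(s_γ) = ⟨2ρ, γ^∨⟩ - 1`.  Then for every simple index
`j` with `⟨α_j, γ^∨⟩ > 0` one has `⟨α_j, γ^∨⟩ = 1`; and for `β := s_j(γ)`,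
`β^∨ = γ^∨ - α_j^∨` and `ℓ(s_β) = ℓ(s_γ) - 2 = ⟨2ρ, β^∨⟩ - 1`. -/
theorem reflection_length_descent {n : ℕ} (c : RootSystemData n)
    (γ : Fin n → ℤ) (hγR : γ ∈ c.R) (hγpos : ∀ i, 0 ≤ γ i)
    (hγns : ∀ i : Fin n, γ ≠ c.sroot i)
    (hlen : (c.len (c.σ γ) : ℤ) = c.pairTwoRho (c.cor γ) - 1)
    (j : Fin n) (hj : 0 < c.pair (c.sroot j) (c.cor γ)) :
    c.pair (c.sroot j) (c.cor γ) = 1 ∧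
    c.cor (c.act (c.s j) γ) = c.cor γ - Pi.single j 1 ∧
    c.len (c.σ (c.act (c.s j) γ)) + 2 = c.len (c.σ γ) ∧
    (c.len (c.σ (c.act (c.s j) γ)) : ℤ) = c.pairTwoRho (c.cor (c.act (c.s j) γ)) - 1 := by
  have hβ := c.len_refl_le (c.act_mem (c.s j) γ hγR) (c.act_s_pos j hγR hγpos (hγns j))
  have hle := c.len_refl_le_act_s j hγR
  have hρ := c.pairTwoRho_cor_act_s j hγR
  have hk : c.pair (c.sroot j) (c.cor γ) = 1 := by omega
  refine ⟨hk, ?_, by omega, by omega⟩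
  rw [c.cor_act_s j hγR, hk, one_smul]
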